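/- Let A = (Q,q₀,δ,F,Σ) be a trim NFA over an ordered alphabet (Σ,≺) with n states and let L = L(A). Then L is NOT Wheeler with respect to (Σ,≺) if and only if there exist words μ, ν, γ ∈ Σ* such that γ is not a suffix of μ and not a suffix of ν, and: (1) μγ^i ≢_L νγ^j for all 0 ≤ i,j ≤ 2^n; (2) there exist a state p ∈ δ(q₀,μ) with p ∈ δ(p,γ) and a state r ∈ δ(q₀,ν) with r ∈ δ(r,γ); (3) either both μ ≺ γ and ν ≺ γ, or both γ ≺ μ and γ ≺ ν. Moreover, when such words exist, they can be chosen with |μ| < |γ|, |ν| < |γ| and |γ| ≤ n³·(2^{3n} + 2·2^{2n} + 2^n + 2). -/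

import Mathlib

/-!
Common framework: words over an ordered alphabet, co-lexicographic order,
(partial) DFAs and NFAs, Wheeler automata and Wheeler languages,
following "Ordering regular languages: a danger zone".
-/

namespace WheelerPaper

/-- Strict co-lexicographic order on words: compare the reverses lexicographically. -/
def Colex {A : Type} [LinearOrder A] (x y : List A) : Prop :=
  List.Lex (· < ·) x.reverse y.reverse

/-- Non-strict co-lexicographic order. -/
def ColexLE {A : Type} [LinearOrder A] (x y : List A) : Prop :=
  Colex x y ∨ x = y

/-- Right context `α⁻¹L` of a word `α` with respect to a language `L`. -/
def rc {A : Type} (L : Set (List A)) (α : List A) : Set (List A) :=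
  {γ | α ++ γ ∈ L}

/-- `Pref L`: the set of prefixes of words of `L`. -/
def Pref {A : Type} (L : Set (List A)) : Set (List A) :=
  {α | ∃ β, α ++ β ∈ L}

/-- `wpow γ i` is `γ^i`, the `i`-fold concatenation of the word `γ`. -/
def wpow {A : Type} (γ : List A) : ℕ → List A
  | 0 => []
  | n + 1 => γ ++ wpow γ n

/-- A DFA with a possibly partial transition function. -/
structure PDFA (A : Type) (Q : Type) where
  init : Q
  trans : Q → A → Option Q
  accept : Q → Prop

/-- Extended (partial) transition function of a `PDFA`. -/
def PDFA.evalFrom {A Q : Type} (M : PDFA A Q) : Q → List A → Option Q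
  | q, [] => some q
  | q, a :: w => (M.trans q a).bind fun q' => PDFA.evalFrom M q' w

/-- The language accepted by a `PDFA`. -/
def PDFA.accepts {A Q : Type} (M : PDFA A Q) : Set (List A) :=
  {w | ∃ q, M.evalFrom M.init w = some q ∧ M.accept q}

/-- A `PDFA` is trim if every state is reachable from the initial state and
every state can reach some accepting state. -/
def PDFA.Trim {A Q : Type} (M : PDFA A Q) : Prop :=
  (∀ q : Q, ∃ α, M.evalFrom M.init α = some q) ∧
  (∀ q : Q, ∃ α q', M.evalFrom q α = some q' ∧ M.accept q')

/-- `r` is a Wheeler order for the DFA `M`: a strict total order on states whose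
minimum is the initial state, the initial state has no incoming transitions, and
the two Wheeler conditions hold. -/
def IsWheelerOrder {A Q : Type} [LinearOrder A] (M : PDFA A Q) (r : Q → Q → Prop) : Prop :=
  IsStrictTotalOrder Q r ∧
  (∀ q : Q, q ≠ M.init → r M.init q) ∧
  (∀ (q : Q) (a : A), M.trans q a ≠ some M.init) ∧
  (∀ (u₁ : Q) (a₁ : A) (v₁ : Q) (u₂ : Q) (a₂ : A) (v₂ : Q),
     M.trans u₁ a₁ = some v₁ → M.trans u₂ a₂ = some v₂ →
     (a₁ < a₂ → r v₁ v₂) ∧ (a₁ = a₂ → r u₁ u₂ → (r v₁ v₂ ∨ v₁ = v₂)))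

/-- A language is Wheeler (w.r.t. the given order on the alphabet) if it is
recognized by some Wheeler DFA. -/
def IsWheelerLang {A : Type} [LinearOrder A] (L : Set (List A)) : Prop :=
  ∃ (n : ℕ) (M : PDFA A (Fin n)) (r : Fin n → Fin n → Prop),
    IsWheelerOrder M r ∧ M.accepts = L

/-- A language is regular if it is recognized by some finite-state (partial) DFA. -/
def IsRegular {A : Type} (L : Set (List A)) : Prop :=
  ∃ (k : ℕ) (M : PDFA A (Fin k)), M.accepts = L

/-- The input-consistent convex refinement `≡^c_L` of the Myhill–Nerode
equivalence: same right context, same last character (or both empty), and every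
word of `Pref L` co-lexicographically between the two words has the same right
context. -/
def EquivC {A : Type} [LinearOrder A] (L : Set (List A)) (α β : List A) : Prop :=
  rc L α = rc L β ∧ α.getLast? = β.getLast? ∧
  ∀ γ ∈ Pref L,
    ((ColexLE α γ ∧ ColexLE γ β) ∨ (ColexLE β γ ∧ ColexLE γ α)) →
    rc L γ = rc L α

/-- An NFA with a single initial state. -/
structure NFA' (A : Type) (Q : Type) where
  init : Q
  trans : Q → A → Set Q
  accept : Q → Prop

/-- One step of an `NFA'` on a set of states. -/
def NFA'.stepSet {A Q : Type} (M : NFA' A Q) (S : Set Q) (a : A) : Set Q :=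
  {q | ∃ p ∈ S, q ∈ M.trans p a}

/-- Extended transition function of an `NFA'` on sets of states. -/
def NFA'.evalFrom {A Q : Type} (M : NFA' A Q) : Set Q → List A → Set Q
  | S, [] => S
  | S, a :: w => NFA'.evalFrom M (M.stepSet S a) w

/-- The language accepted by an `NFA'`. -/
def NFA'.accepts {A Q : Type} (M : NFA' A Q) : Set (List A) :=
  {w | ∃ q ∈ M.evalFrom {M.init} w, M.accept q}

/-- An `NFA'` is trim if every state is reachable from the initial state and
every state can reach some accepting state. -/
def NFA'.Trim {A Q : Type} (M : NFA' A Q) : Prop :=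
  (∀ q : Q, ∃ α, q ∈ M.evalFrom {M.init} α) ∧
  (∀ q : Q, ∃ α, ∃ q' ∈ M.evalFrom {q} α, M.accept q')

/-- `r` is a Wheeler order for the NFA `M`. -/
def IsWheelerNFAOrder {A Q : Type} [LinearOrder A] (M : NFA' A Q) (r : Q → Q → Prop) : Prop :=
  IsStrictTotalOrder Q r ∧
  (∀ q : Q, q ≠ M.init → r M.init q) ∧
  (∀ (q : Q) (a : A), M.init ∉ M.trans q a) ∧
  (∀ (u₁ : Q) (a₁ : A) (v₁ : Q) (u₂ : Q) (a₂ : A) (v₂ : Q),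
     v₁ ∈ M.trans u₁ a₁ → v₂ ∈ M.trans u₂ a₂ →
     (a₁ < a₂ → r v₁ v₂) ∧ (a₁ = a₂ → r u₁ u₂ → (r v₁ v₂ ∨ v₁ = v₂)))

/-- `I` is an interval with respect to the strict order `r`. -/
def IsIntervalRel {Q : Type} (r : Q → Q → Prop) (I : Set Q) : Prop :=
  ∀ x y z : Q, (r x y ∨ x = y) → (r y z ∨ y = z) → x ∈ I → z ∈ I → y ∈ I

/-- The class of star-free languages: built from `∅`, `{ε}` and the singletons
`{a}` by union, concatenation and complement. -/
inductive StarFree {A : Type} : Set (List A) → Prop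
  | empty : StarFree ∅
  | eps : StarFree {[]}
  | single (a : A) : StarFree {[a]}
  | union {L₁ L₂ : Set (List A)} : StarFree L₁ → StarFree L₂ → StarFree (L₁ ∪ L₂)
  | concat {L₁ L₂ : Set (List A)} : StarFree L₁ → StarFree L₂ →
      StarFree {w | ∃ u v, u ∈ L₁ ∧ v ∈ L₂ ∧ w = u ++ v}
  | compl {L : Set (List A)} : StarFree L → StarFree Lᶜ


/-- The language of all words over the sub-alphabet `S`. -/
def wordsOver {A : Type} (S : Set A) : Language A := {w | ∀ x ∈ w, x ∈ S}


section Helpers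

lemma colex_iff {A : Type} [LinearOrder A] (x y : List A) :
    Colex x y ↔ x.reverse < y.reverse := Iff.rfl

lemma Colex.tr {A : Type} [LinearOrder A] {x y z : List A} (h : Colex x y) (h' : Colex y z) :
    Colex x z := by
  rw [colex_iff] at *
  exact lt_trans h h'

lemma Colex.irr {A : Type} [LinearOrder A] {x : List A} (h : Colex x x) : False := by
  rw [colex_iff] at *
  exact lt_irrefl _ h

lemma colex_tri {A : Type} [LinearOrder A] (x y : List A) : Colex x y ∨ x = y ∨ Colex y x := by
  rw [colex_iff, colex_iff]
  rcases lt_trichotomy x.reverse y.reverse with h | h | h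
  · exact Or.inl h
  · exact Or.inr (Or.inl (List.reverse_injective h))
  · exact Or.inr (Or.inr h)

lemma colex_append {A : Type} [LinearOrder A] (x y z : List A) :
    Colex (x ++ z) (y ++ z) ↔ Colex x y := by
  unfold Colex
  rw [List.reverse_append, List.reverse_append]
  induction z.reverse with
  | nil => simp
  | cons a l ih => simpa [List.cons_append, List.lex_cons_iff] using ih

lemma colex_snoc {A : Type} [LinearOrder A] (x y : List A) (a b : A) :
    Colex (x ++ [a]) (y ++ [b]) ↔ a < b ∨ (a = b ∧ Colex x y) := by
  rw [colex_iff, colex_iff]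
  simp [List.cons_lt_cons_iff]

lemma not_colex_nil {A : Type} [LinearOrder A] {x : List A} (h : Colex x []) : False := by
  rw [colex_iff] at h
  simp at h

lemma nil_colex {A : Type} [LinearOrder A] {x : List A} (h : x ≠ []) : Colex [] x := by
  rcases colex_tri [] x with h' | h' | h'
  · exact h'
  · exact absurd h'.symm h
  · exact (not_colex_nil h').elim

lemma snoc_cases {A : Type} (x : List A) : x = [] ∨ ∃ y a, x = y ++ [a] := by
  induction x using List.reverseRecOn with
  | nil => exact Or.inl rfl
  | append_singleton y a _ => exact Or.inr ⟨y, a, rfl⟩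

/-- `μ ≺ γ` implies `μ ≺ zγ`. -/
lemma colex_prepend {A : Type} [LinearOrder A] {x y : List A} (h : Colex x y) (z : List A) :
    Colex x (z ++ y) := by
  rcases eq_or_ne z [] with rfl | hz
  · simpa using h
  · have : Colex ([] ++ y) (z ++ y) := (colex_append _ _ _).2 (nil_colex hz)
    exact h.tr this

/-- `γ ≺ μ` with `γ` not a suffix of `μ` implies `zγ ≺ μ`. -/
lemma colex_prepend' {A : Type} [LinearOrder A] {x y : List A} (h : Colex x y)
    (hs : ¬ x <:+ y) (z : List A) : Colex (z ++ x) y := by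
  induction x using List.reverseRecOn generalizing y with
  | nil => exact absurd (List.nil_suffix) hs
  | append_singleton x a ih =>
    rcases snoc_cases y with rfl | ⟨y, b, rfl⟩
    · exact (not_colex_nil h).elim
    · rw [← List.append_assoc, colex_snoc]
      rw [colex_snoc] at h
      rcases h with h | ⟨rfl, h⟩
      · exact Or.inl h
      · refine Or.inr ⟨rfl, ih h ?_⟩
        rintro ⟨t, rfl⟩
        exact hs ⟨t, by simp⟩

lemma colex_last {A : Type} [LinearOrder A] {x y x' y' : List A} (h : Colex x y)
    (hne : x.getLast? ≠ y.getLast?) (hx : x'.getLast? = x.getLast?)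
    (hy : y'.getLast? = y.getLast?) : Colex x' y' := by
  rcases snoc_cases y with rfl | ⟨y, b, rfl⟩
  · exact (not_colex_nil h).elim
  rcases snoc_cases y' with rfl | ⟨y', b', rfl⟩
  · simp at hy
  rcases snoc_cases x with rfl | ⟨x, a, rfl⟩
  · rcases snoc_cases x' with rfl | ⟨x', a', rfl⟩
    · exact nil_colex (by simp)
    · simp at hx
  · rcases snoc_cases x' with rfl | ⟨x', a', rfl⟩
    · simp at hx
    · simp at hx hy hne
      subst hx hy
      rw [colex_snoc] at h ⊢
      rcases h with h | ⟨h, _⟩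
      · exact Or.inl h
      · exact absurd h hne

lemma wpow_add {A : Type} (γ : List A) (i j : ℕ) : wpow γ (i + j) = wpow γ i ++ wpow γ j := by
  induction i with
  | zero => simp [wpow]
  | succ i ih => rw [Nat.succ_add]; simp [wpow, ih]

lemma wpow_mul {A : Type} (γ : List A) (i j : ℕ) : wpow γ (i * j) = wpow (wpow γ i) j := by
  induction j with
  | zero => simp [wpow]
  | succ j ih => rw [Nat.mul_succ, Nat.add_comm, wpow_add, ih]; rfl

lemma wpow_one {A : Type} (γ : List A) : wpow γ 1 = γ := by simp [wpow]

lemma wpow_succ' {A : Type} (γ : List A) (i : ℕ) : wpow γ (i + 1) = wpow γ i ++ γ := by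
  rw [wpow_add, wpow_one]

lemma wpow_length {A : Type} (γ : List A) (i : ℕ) : (wpow γ i).length = i * γ.length := by
  induction i with
  | zero => simp [wpow]
  | succ i ih => simp [wpow, ih]; ring

lemma rc_append {A : Type} {L : Set (List A)} {x y : List A} (h : rc L x = rc L y) (z : List A) :
    rc L (x ++ z) = rc L (y ++ z) := by
  ext w
  have := Set.ext_iff.1 h (z ++ w)
  simpa [rc] using this

lemma pref_iff {A : Type} {L : Set (List A)} {x : List A} : x ∈ Pref L ↔ (rc L x).Nonempty :=
  Iff.rfl

lemma pref_congr {A : Type} {L : Set (List A)} {x y : List A} (h : rc L x = rc L y) :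
    x ∈ Pref L ↔ y ∈ Pref L := by
  rw [pref_iff, pref_iff, h]

lemma pref_left {A : Type} {L : Set (List A)} {x y : List A} (h : x ++ y ∈ Pref L) :
    x ∈ Pref L := by
  obtain ⟨z, hz⟩ := h
  exact ⟨y ++ z, by simpa using hz⟩

lemma mem_iff_rc {A : Type} {L : Set (List A)} {x : List A} : x ∈ L ↔ [] ∈ rc L x := by
  simp [rc]

/-- iterating a loop -/
lemma rc_loop {A : Type} {L : Set (List A)} {x γ : List A} (h : rc L (x ++ γ) = rc L x) (k : ℕ) :
    rc L (x ++ wpow γ k) = rc L x := by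
  induction k with
  | zero => simp [wpow]
  | succ k ih =>
    have := rc_append h (wpow γ k)
    simpa [wpow, ih] using this

/-! ### pigeonhole -/

lemma pigeon {A S : Type} [Finite S] (f : List A → S) (x : List A) (m : ℕ)
    (hm : Nat.card S ≤ m) :
    ∃ i j, i < j ∧ j ≤ m ∧ f (x.take i) = f (x.take j) := by
  by_contra hcon
  push Not at hcon
  have hinj : Function.Injective (fun i : Fin (m + 1) => f (x.take i)) := by
    intro i j hij
    rcases lt_trichotomy i j with h | h | h
    · exact absurd hij (hcon i j h (by omega))
    · exact h
    · exact absurd hij.symm (hcon j i h (by omega))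
  have := Nat.card_le_card_of_injective _ hinj
  simp at this
  omega

lemma shrink {A S : Type} [Finite S] (f : List A → S)
    (hf : ∀ x y z, f x = f y → f (x ++ z) = f (y ++ z)) (x : List A) :
    ∃ x', f x' = f x ∧ x'.length + 1 ≤ Nat.card S := by
  induction hl : x.length using Nat.strong_induction_on generalizing x with
  | _ l ih =>
    by_cases h : x.length + 1 ≤ Nat.card S
    · exact ⟨x, rfl, h⟩
    · obtain ⟨i, j, hij, hj, he⟩ := pigeon f x x.length (by omega)
      have h1 : f (x.take i ++ x.drop j) = f x := by
        rw [hf _ _ _ he, List.take_append_drop]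
      obtain ⟨x', h2, h3⟩ := ih (x.take i ++ x.drop j).length (by simp; omega) _ rfl
      exact ⟨x', h2.trans h1, h3⟩

lemma shrinkLast {A S : Type} [Finite S] (f : List A → S)
    (hf : ∀ x y z, f x = f y → f (x ++ z) = f (y ++ z)) (x : List A) :
    ∃ x', f x' = f x ∧ x'.getLast? = x.getLast? ∧ x'.length ≤ Nat.card S := by
  rcases snoc_cases x with rfl | ⟨y, a, rfl⟩
  · exact ⟨[], rfl, rfl, by simp⟩
  · obtain ⟨y', h1, h2⟩ := shrink f hf y
    exact ⟨y' ++ [a], hf _ _ _ h1, by simp, by simpa using h2⟩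

/-! ### From a triple to short witnesses (deterministic version) -/

/-- the right context of a word, as an element of the set of all right contexts -/
def stt {A : Type} (L : Set (List A)) (x : List A) : Set.range (rc L) := ⟨rc L x, x, rfl⟩

lemma stt_eq {A : Type} {L : Set (List A)} {x y : List A} :
    stt L x = stt L y ↔ rc L x = rc L y := Subtype.ext_iff

lemma stt_append {A : Type} {L : Set (List A)} (x y z : List A) (h : stt L x = stt L y) :
    stt L (x ++ z) = stt L (y ++ z) :=
  stt_eq.2 (rc_append (stt_eq.1 h) z)

lemma common2 {A : Type} [LinearOrder A] (x y : List A) (h : Colex x y) :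
    ∃ x' y' η, x = x' ++ η ∧ y = y' ++ η ∧ Colex x' y' ∧ x'.getLast? ≠ y'.getLast? := by
  induction x using List.reverseRecOn generalizing y with
  | nil =>
    rcases snoc_cases y with rfl | ⟨y, b, rfl⟩
    · exact (not_colex_nil h).elim
    · exact ⟨[], y ++ [b], [], by simp, by simp, h, by simp⟩
  | append_singleton x a ih =>
    rcases snoc_cases y with rfl | ⟨y, b, rfl⟩
    · exact (not_colex_nil h).elim
    · by_cases hab : a = b
      · subst hab
        obtain ⟨x', y', η, h1, h2, h3, h4⟩ := ih y ((colex_append _ _ _).1 h)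
        exact ⟨x', y', η ++ [a], by simp [h1], by simp [h2], h3, h4⟩
      · exact ⟨x ++ [a], y ++ [b], [], by simp, by simp, h, by simpa using hab⟩

lemma common3 {A : Type} [LinearOrder A] (x y z : List A) (h : Colex x y) (h' : Colex y z) :
    ∃ x' y' z' η, x = x' ++ η ∧ y = y' ++ η ∧ z = z' ++ η ∧ Colex x' y' ∧ Colex y' z' ∧
      ¬ (x'.getLast? = y'.getLast? ∧ y'.getLast? = z'.getLast?) := by
  induction x using List.reverseRecOn generalizing y z with
  | nil =>
    rcases snoc_cases y with rfl | ⟨y, b, rfl⟩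
    · exact (not_colex_nil h).elim
    · exact ⟨[], y ++ [b], z, [], by simp, by simp, by simp, h, h', by simp⟩
  | append_singleton x a ih =>
    by_cases hc : ((x ++ [a]).getLast? = y.getLast? ∧ y.getLast? = z.getLast?)
    · rcases snoc_cases y with rfl | ⟨y, b, rfl⟩
      · exact (not_colex_nil h).elim
      rcases snoc_cases z with rfl | ⟨z, c, rfl⟩
      · exact (not_colex_nil h').elim
      simp at hc
      obtain ⟨rfl, rfl⟩ := hc
      obtain ⟨x', y', z', η, h1, h2, h3, h4⟩ :=
        ih y z ((colex_append _ _ _).1 h) ((colex_append _ _ _).1 h')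
      exact ⟨x', y', z', η ++ [a], by simp [h1], by simp [h2], by simp [h3], h4⟩
    · exact ⟨x ++ [a], y, z, [], by simp, by simp, by simp, h, h', hc⟩

lemma shrinkPair {A : Type} [LinearOrder A] {L : Set (List A)} [Finite (Set.range (rc L))]
    (N : ℕ) (hN : Nat.card (Set.range (rc L)) ≤ N) (x y : List A) (h : Colex x y) :
    ∃ x' y', rc L x' = rc L x ∧ rc L y' = rc L y ∧ Colex x' y' ∧
      x'.getLast? = x.getLast? ∧ y'.getLast? = y.getLast? ∧
      x'.length ≤ N ^ 2 + N ∧ y'.length ≤ N ^ 2 + N := by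
  obtain ⟨x0, y0, η, rfl, rfl, h3, h4⟩ := common2 x y h
  obtain ⟨x1, hx1, hx2, hx3⟩ := shrinkLast (stt L) stt_append x0
  obtain ⟨y1, hy1, hy2, hy3⟩ := shrinkLast (stt L) stt_append y0
  have hc : Colex x1 y1 := colex_last h3 h4 hx2 hy2
  obtain ⟨η', he1, he2, he3⟩ := shrinkLast (fun η => (stt L (x1 ++ η), stt L (y1 ++ η)))
    (by
      intro u v w huv
      simp only [Prod.mk.injEq] at huv ⊢
      rw [← List.append_assoc, ← List.append_assoc, ← List.append_assoc, ← List.append_assoc]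
      exact ⟨stt_append _ _ _ huv.1, stt_append _ _ _ huv.2⟩) η
  simp only [Prod.mk.injEq] at he1
  rw [Nat.card_prod] at he3
  have hm := Nat.mul_le_mul hN hN
  refine ⟨x1 ++ η', y1 ++ η', ?_, ?_, (colex_append _ _ _).2 hc, ?_, ?_, ?_, ?_⟩
  · rw [stt_eq.1 he1.1]; exact rc_append (stt_eq.1 hx1) _
  · rw [stt_eq.1 he1.2]; exact rc_append (stt_eq.1 hy1) _
  · simp [List.getLast?_append, he2, hx2]
  · simp [List.getLast?_append, he2, hy2]
  · simp; nlinarith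
  · simp; nlinarith

lemma shrinkTriple {A : Type} [LinearOrder A] {L : Set (List A)} [Finite (Set.range (rc L))]
    (N : ℕ) (hN : Nat.card (Set.range (rc L)) ≤ N) (x y z : List A) (h : Colex x y)
    (h' : Colex y z) (hne : ¬ (x.getLast? = y.getLast? ∧ y.getLast? = z.getLast?)) :
    ∃ x' y' z', rc L x' = rc L x ∧ rc L y' = rc L y ∧ rc L z' = rc L z ∧
      Colex x' y' ∧ Colex y' z' ∧
      x'.length ≤ N ^ 2 + N ∧ y'.length ≤ N ^ 2 + N ∧ z'.length ≤ N ^ 2 + N := by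
  by_cases hc : y.getLast? = z.getLast?
  · have hc' : x.getLast? ≠ y.getLast? := fun h => hne ⟨h, hc⟩
    obtain ⟨y', z', h1, h2, h3, h4, h5, h6, h7⟩ := shrinkPair N hN y z h'
    obtain ⟨x1, hx1, hx2, hx3⟩ := shrinkLast (stt L) stt_append x
    exact ⟨x1, y', z', stt_eq.1 hx1, h1, h2, colex_last h hc' hx2 h4, h3, by nlinarith, h6, h7⟩
  · obtain ⟨x', y', h1, h2, h3, h4, h5, h6, h7⟩ := shrinkPair N hN x y h
    obtain ⟨z1, hz1, hz2, hz3⟩ := shrinkLast (stt L) stt_append z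
    exact ⟨x', y', z1, h1, h2, stt_eq.1 hz1, h3, colex_last h' hc h5 hz2, h6, h7, by nlinarith⟩

/-- Three words with long common suffix and `rc` alternating. -/
def Triple {A : Type} [LinearOrder A] (L : Set (List A)) (K : ℕ) : Prop :=
  ∃ x y z ζ : List A, K ≤ ζ.length ∧ Colex x y ∧ Colex y z ∧
    x ++ ζ ∈ Pref L ∧ y ++ ζ ∈ Pref L ∧ z ++ ζ ∈ Pref L ∧
    rc L (x ++ ζ) ≠ rc L (y ++ ζ) ∧ rc L (y ++ ζ) ≠ rc L (z ++ ζ)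

lemma det_witness {A : Type} [LinearOrder A] {L : Set (List A)} [Finite (Set.range (rc L))]
    (N : ℕ) (hN : Nat.card (Set.range (rc L)) ≤ N) (hT : Triple L (N ^ 3)) :
    ∃ μ ν γ : List A, μ ∈ Pref L ∧ ν ∈ Pref L ∧ rc L μ ≠ rc L ν ∧
      rc L (μ ++ γ) = rc L μ ∧ rc L (ν ++ γ) = rc L ν ∧
      ((Colex μ γ ∧ Colex ν γ) ∨ (Colex γ μ ∧ Colex γ ν)) ∧
      μ.length < γ.length ∧ ν.length < γ.length ∧ γ.length ≤ N ^ 3 + N ^ 2 + N := by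
  obtain ⟨x, y, z, ζ0, hK, hxy, hyz, hx, hy, hz, hd1, hd2⟩ := hT
  obtain ⟨x, y, z, η, rfl, rfl, rfl, hxy, hyz, hlast⟩ := common3 x y z hxy hyz
  rw [List.append_assoc] at hx hy hz
  rw [List.append_assoc, List.append_assoc] at hd1 hd2
  obtain ⟨ζ, hζ⟩ : ∃ ζ, η ++ ζ0 = ζ := ⟨_, rfl⟩
  have hK' : N ^ 3 ≤ ζ.length := by rw [← hζ]; simp; omega
  rw [hζ] at hx hy hz hd1 hd2
  obtain ⟨x', y', z', hx', hy', hz', hxy', hyz', lx, ly, lz⟩ := shrinkTriple N hN x y z hxy hyz hlast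
  rw [← pref_congr (rc_append hx' ζ)] at hx
  rw [← pref_congr (rc_append hy' ζ)] at hy
  rw [← pref_congr (rc_append hz' ζ)] at hz
  rw [← rc_append hx' ζ, ← rc_append hy' ζ] at hd1
  rw [← rc_append hz' ζ, ← rc_append hy' ζ] at hd2
  obtain ⟨i, j, hij, hj, he⟩ := pigeon
    (fun η => (stt L (x' ++ η), stt L (y' ++ η), stt L (z' ++ η))) ζ (N ^ 3) (by
      rw [Nat.card_prod, Nat.card_prod]
      calc _ ≤ N * (N * N) := Nat.mul_le_mul hN (Nat.mul_le_mul hN hN)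
        _ = N ^ 3 := by ring)
  simp only [Prod.mk.injEq, stt_eq] at he
  obtain ⟨hex, hey, hez⟩ := he
  obtain ⟨ζ1, hζ1⟩ : ∃ ζ1, ζ1 = ζ.take i := ⟨_, rfl⟩
  obtain ⟨γ0, hγ0⟩ : ∃ γ0, γ0 = (ζ.take j).drop i := ⟨_, rfl⟩
  have e1 : ζ.take j = ζ1 ++ γ0 := by
    have := List.take_append_drop i (ζ.take j)
    rw [List.take_take, min_eq_left hij.le] at this
    rw [hζ1, hγ0, this]
  have e2 : ζ = ζ1 ++ (γ0 ++ ζ.drop j) := by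
    rw [← List.append_assoc, ← e1, List.take_append_drop]
  have l1 : ζ1.length = i := by rw [hζ1]; simp; omega
  have l2 : γ0.length = j - i := by rw [hγ0]; simp; omega
  rw [e1, ← hζ1, ← List.append_assoc] at hex hey hez
  obtain ⟨m, hm⟩ : ∃ m, m = N ^ 2 + N + i := ⟨_, rfl⟩
  have hdm := Nat.div_add_mod m (j - i)
  have hml := Nat.mod_lt m (show j - i > 0 by omega)
  obtain ⟨k, hk⟩ : ∃ k, k = m / (j - i) + 1 := ⟨_, rfl⟩
  have lk : (wpow γ0 k).length = (j - i) * (m / (j - i)) + (j - i) := by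
    rw [wpow_length, l2, hk]; ring
  have hx0 : x' ++ ζ1 ∈ Pref L := by
    rw [e2, ← List.append_assoc] at hx; exact pref_left hx
  have hy0 : y' ++ ζ1 ∈ Pref L := by
    rw [e2, ← List.append_assoc] at hy; exact pref_left hy
  have hz0 : z' ++ ζ1 ∈ Pref L := by
    rw [e2, ← List.append_assoc] at hz; exact pref_left hz
  have hd1' : rc L (x' ++ ζ1) ≠ rc L (y' ++ ζ1) := by
    intro h
    apply hd1
    have := rc_append h (γ0 ++ ζ.drop j)
    rwa [List.append_assoc, List.append_assoc, ← e2] at this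
  have hd2' : rc L (y' ++ ζ1) ≠ rc L (z' ++ ζ1) := by
    intro h
    apply hd2
    have := rc_append h (γ0 ++ ζ.drop j)
    rwa [List.append_assoc, List.append_assoc, ← e2] at this
  have mx : (x' ++ ζ1).length < (wpow γ0 k).length := by rw [lk]; simp; omega
  have my : (y' ++ ζ1).length < (wpow γ0 k).length := by rw [lk]; simp; omega
  have mz : (z' ++ ζ1).length < (wpow γ0 k).length := by rw [lk]; simp; omega
  have mg : (wpow γ0 k).length ≤ N ^ 3 + N ^ 2 + N := by rw [lk]; omega
  have cxy := (colex_append x' y' ζ1).2 hxy'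
  have cyz := (colex_append y' z' ζ1).2 hyz'
  rcases colex_tri (y' ++ ζ1) (wpow γ0 k) with h | h | h
  · exact ⟨x' ++ ζ1, y' ++ ζ1, wpow γ0 k, hx0, hy0, hd1', rc_loop hex.symm k, rc_loop hey.symm k,
      Or.inl ⟨cxy.tr h, h⟩, mx, my, mg⟩
  · rw [h] at my; omega
  · exact ⟨y' ++ ζ1, z' ++ ζ1, wpow γ0 k, hy0, hz0, hd2', rc_loop hey.symm k, rc_loop hez.symm k,
      Or.inr ⟨h, h.tr cyz⟩, my, mz, mg⟩

/-! ### Non-Wheeler implies triples -/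

lemma PDFA.evalFrom_append {A Q : Type} (M : PDFA A Q) (q : Q) (x y : List A) :
    M.evalFrom q (x ++ y) = (M.evalFrom q x).bind fun q' => M.evalFrom q' y := by
  induction x generalizing q with
  | nil => simp [PDFA.evalFrom]
  | cons a x ih =>
    simp only [List.cons_append, PDFA.evalFrom]
    cases M.trans q a with
    | none => simp
    | some q' => simp [ih]

lemma PDFA.evalFrom_snoc {A Q : Type} (M : PDFA A Q) (q : Q) (x : List A) (a : A) :
    M.evalFrom q (x ++ [a]) = (M.evalFrom q x).bind fun q' => M.trans q' a := by
  rw [PDFA.evalFrom_append]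
  simp [PDFA.evalFrom]

open Classical in
lemma wheeler_of_key {A S : Type} [LinearOrder A] [Finite S] (L : Set (List A)) (hne : [] ∈ Pref L)
    (key : List A → S)
    (hinv : ∀ x y a, key x = key y → key (x ++ [a]) = key (y ++ [a]))
    (hrc : ∀ x y, key x = key y → rc L x = rc L y)
    (hlast : ∀ x y, key x = key y → x.getLast? = y.getLast?)
    (hord : ∀ x y x' y', x ∈ Pref L → y ∈ Pref L → x' ∈ Pref L → y' ∈ Pref L →
      key x = key x' → key y = key y' → key x ≠ key y → Colex x y → Colex x' y') :
    IsWheelerLang L := by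
  obtain ⟨n, ⟨e⟩⟩ := Finite.exists_equiv_fin {s : S // ∃ w ∈ Pref L, key w = s}
  have hrep : ∀ q : Fin n, ∃ w ∈ Pref L, ∀ h, e ⟨key w, h⟩ = q := by
    intro q
    obtain ⟨w, hw, hk⟩ := (e.symm q).2
    refine ⟨w, hw, fun h => ?_⟩
    rw [← e.apply_symm_apply q]
    congr 1
    exact Subtype.ext hk
  choose rep hrepP hrepE using hrep
  let cls : (w : List A) → w ∈ Pref L → Fin n := fun w hw => e ⟨key w, w, hw, rfl⟩
  have cls_iff : ∀ w hw w' hw', cls w hw = cls w' hw' ↔ key w = key w' := by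
    intro w hw w' hw'
    simp [cls]
  have cls_rep : ∀ q, cls (rep q) (hrepP q) = q := fun q => hrepE q _
  have rep_key : ∀ w hw, key (rep (cls w hw)) = key w := by
    intro w hw
    rw [← cls_iff _ (hrepP _) _ hw, cls_rep]
  have rep_inj : ∀ p q, key (rep p) = key (rep q) → p = q := by
    intro p q h
    rw [← cls_iff _ (hrepP _) _ (hrepP _), cls_rep, cls_rep] at h
    exact h
  let M : PDFA A (Fin n) :=
    { init := cls [] hne
      trans := fun q a => if h : rep q ++ [a] ∈ Pref L then some (cls _ h) else none
      accept := fun q => rep q ∈ L }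
  have rep_init : rep (cls [] hne) = [] := by
    have := hlast _ _ (rep_key [] hne)
    simpa using this
  have htr : ∀ u a v, M.trans u a = some v → ∃ h : rep u ++ [a] ∈ Pref L, cls _ h = v := by
    intro u a v h
    simp only [M] at h
    split_ifs at h with h'
    exact ⟨h', by simpa using h⟩
  refine ⟨n, M, fun p q => Colex (rep p) (rep q), ⟨?_, ?_, ?_, ?_⟩, ?_⟩
  · exact
      { trichotomous := by
          intro a b h1 h2
          rcases colex_tri (rep a) (rep b) with h | h | h
          · exact absurd h h1
          · exact rep_inj _ _ (by rw [h])
          · exact absurd h h2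
        irrefl := fun a h => h.irr
        trans := fun a b c h h' => h.tr h' }
  · intro q hq
    show Colex (rep (cls [] hne)) (rep q)
    rw [rep_init]
    apply nil_colex
    intro h
    apply hq
    apply rep_inj
    show _ = key (rep (cls [] hne))
    rw [rep_init, h]
  · intro q a h
    obtain ⟨h1, h2⟩ := htr _ _ _ h
    have := hlast _ _ ((cls_iff _ h1 _ hne).1 h2)
    simp at this
  · intro u₁ a₁ v₁ u₂ a₂ v₂ h1 h2
    obtain ⟨hp1, rfl⟩ := htr _ _ _ h1
    obtain ⟨hp2, rfl⟩ := htr _ _ _ h2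
    have key1 : Colex (rep u₁ ++ [a₁]) (rep u₂ ++ [a₂]) →
        key (rep u₁ ++ [a₁]) ≠ key (rep u₂ ++ [a₂]) →
        Colex (rep (cls _ hp1)) (rep (cls _ hp2)) := fun hc hk =>
      hord _ _ _ _ hp1 hp2 (hrepP _) (hrepP _) (rep_key _ hp1).symm (rep_key _ hp2).symm hk hc
    constructor
    · intro h
      apply key1 ((colex_snoc _ _ _ _).2 (Or.inl h))
      intro hk
      have := hlast _ _ hk
      simp at this
      exact absurd this h.ne
    · intro h hr
      by_cases hk : key (rep u₁ ++ [a₁]) = key (rep u₂ ++ [a₂])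
      · exact Or.inr ((cls_iff _ hp1 _ hp2).2 hk)
      · exact Or.inl (key1 ((colex_snoc _ _ _ _).2 (Or.inr ⟨h, hr⟩)) hk)
  · have hev : ∀ w, M.evalFrom M.init w = if h : w ∈ Pref L then some (cls w h) else none := by
      intro w
      induction w using List.reverseRecOn with
      | nil => simp [PDFA.evalFrom, hne, M]
      | append_singleton w a ih =>
        rw [PDFA.evalFrom_snoc, ih]
        by_cases hw : w ∈ Pref L
        · simp only [hw, dite_true, Option.bind_some]
          have hk := rep_key w hw
          have hk' := hinv _ _ a hk
          have hp := pref_congr (hrc _ _ hk')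
          by_cases hwa : w ++ [a] ∈ Pref L
          · simp only [M, hp.2 hwa, hwa, dite_true]
            congr 1
            exact (cls_iff _ (hp.2 hwa) _ hwa).2 hk'
          · simp only [M, hwa, hp.not.2 hwa, dite_false]
        · have : w ++ [a] ∉ Pref L := fun h => hw (pref_left h)
          simp [hw, this]
    ext w
    simp only [PDFA.accepts, Set.mem_ofPred_eq, hev]
    constructor
    · rintro ⟨q, h, hq⟩
      split_ifs at h with hw
      have h : cls w hw = q := by simpa using h
      subst h
      have hq : rep (cls w hw) ∈ L := hq
      rw [mem_iff_rc, hrc _ _ (rep_key w hw)] at hq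
      exact mem_iff_rc.2 hq
    · intro hw
      have hp : w ∈ Pref L := ⟨[], by simpa using hw⟩
      refine ⟨cls w hp, by simp [hp], ?_⟩
      show rep (cls w hp) ∈ L
      rw [mem_iff_rc, hrc _ _ (rep_key w hp)]
      exact mem_iff_rc.1 hw

/-- last `K` letters -/
def suf {A : Type} (K : ℕ) (x : List A) : List A := x.drop (x.length - K)

lemma suf_length {A : Type} (K : ℕ) (x : List A) : (suf K x).length ≤ K := by
  simp [suf]; omega

lemma suf_spec {A : Type} (K : ℕ) (x : List A) :
    ∃ y, x = y ++ suf K x ∧ (K ≤ (suf K x).length ∨ y = []) := by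
  refine ⟨x.take (x.length - K), (List.take_append_drop _ _).symm, ?_⟩
  by_cases h : K ≤ x.length
  · left; simp [suf]; omega
  · right
    rw [Nat.sub_eq_zero_of_le (by omega)]; simp

lemma suf_snoc {A : Type} (K : ℕ) (x : List A) (a : A) :
    suf (K + 1) (x ++ [a]) = suf K x ++ [a] := by
  simp only [suf, List.length_append, List.length_singleton, Nat.add_sub_add_right]
  rw [List.drop_append_of_le_length (by omega)]

lemma suf_nil {A : Type} (K : ℕ) : suf K ([] : List A) = [] := by simp [suf]

lemma suf_mono {A : Type} [LinearOrder A] (K : ℕ) (x y : List A) (h : Colex x y) :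
    suf K x = suf K y ∨ Colex (suf K x) (suf K y) := by
  induction K generalizing x y with
  | zero => left; simp [suf]
  | succ K ih =>
    rcases snoc_cases y with rfl | ⟨y, b, rfl⟩
    · exact (not_colex_nil h).elim
    rcases snoc_cases x with rfl | ⟨x, a, rfl⟩
    · right
      rw [suf_nil, suf_snoc]
      exact nil_colex (by simp)
    · rw [suf_snoc, suf_snoc]
      rw [colex_snoc] at h
      rcases h with h | ⟨rfl, h⟩
      · right; exact (colex_snoc _ _ _ _).2 (Or.inl h)
      · rcases ih x y h with h | h
        · left; rw [h]
        · right; exact (colex_append _ _ _).2 h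

lemma suf_suf_snoc {A : Type} (K : ℕ) (x y : List A) (a : A) (h : suf (K + 1) x = suf (K + 1) y) :
    suf (K + 1) (x ++ [a]) = suf (K + 1) (y ++ [a]) := by
  rw [suf_snoc, suf_snoc]
  congr 1
  rcases snoc_cases x with rfl | ⟨x, b, rfl⟩
  · rcases snoc_cases y with rfl | ⟨y, c, rfl⟩
    · rfl
    · rw [suf_nil, suf_snoc] at h; simp at h
  rcases snoc_cases y with rfl | ⟨y, c, rfl⟩
  · rw [suf_nil, suf_snoc] at h; simp at h
  have aux : ∀ (z : List A), suf K z = (suf (K + 1) z).drop ((suf (K + 1) z).length - K) := by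
    intro z
    simp only [suf, List.length_drop, List.drop_drop]
    congr 1
    omega
  rw [aux, aux, h]

lemma suf_last {A : Type} (K : ℕ) (x y : List A) (h : suf (K + 1) x = suf (K + 1) y) :
    x.getLast? = y.getLast? := by
  rcases snoc_cases x with rfl | ⟨x, b, rfl⟩
  · rcases snoc_cases y with rfl | ⟨y, c, rfl⟩
    · rfl
    · rw [suf_nil, suf_snoc] at h; simp at h
  rcases snoc_cases y with rfl | ⟨y, c, rfl⟩
  · rw [suf_nil, suf_snoc] at h; simp at h
  rw [suf_snoc, suf_snoc] at h
  have := congrArg List.getLast? h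
  simpa using this

lemma wheeler_of_not_triple {A : Type} [Finite A] [LinearOrder A] {L : Set (List A)}
    [Finite (Set.range (rc L))] (hne : [] ∈ Pref L) (K : ℕ) (hT : ¬ Triple L (K + 1)) :
    IsWheelerLang L := by
  have hfin : Finite {l : List A // l.length ≤ K + 1} :=
    (List.finite_length_le A (K + 1)).to_subtype
  -- the core: no alternation inside a suffix class
  have core : ∀ x y z, x ∈ Pref L → y ∈ Pref L → z ∈ Pref L →
      suf (K + 1) x = suf (K + 1) y → suf (K + 1) y = suf (K + 1) z →
      Colex x y → Colex y z → rc L x ≠ rc L y → rc L y ≠ rc L z → False := by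
    intro x y z hx hy hz exy eyz cxy cyz dxy dyz
    obtain ⟨x0, hx0, hx1⟩ := suf_spec (K + 1) x
    obtain ⟨y0, hy0, hy1⟩ := suf_spec (K + 1) y
    obtain ⟨z0, hz0, hz1⟩ := suf_spec (K + 1) z
    rw [exy] at hx0 hx1
    rw [← eyz] at hz0 hz1
    obtain ⟨ζ, hζ⟩ : ∃ ζ, suf (K + 1) y = ζ := ⟨_, rfl⟩
    rw [hζ] at hx0 hx1 hy0 hy1 hz0 hz1
    rw [hx0, hy0, colex_append] at cxy
    rw [hy0, hz0, colex_append] at cyz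
    apply hT
    refine ⟨x0, y0, z0, ζ, ?_, cxy, cyz, hx0 ▸ hx, hy0 ▸ hy, hz0 ▸ hz,
      ?_, ?_⟩
    · rcases hy1 with h | h
      · exact h
      · subst h; exact (not_colex_nil cxy).elim
    · rw [← hx0, ← hy0]; exact dxy
    · rw [← hz0, ← hy0]; exact dyz
  apply wheeler_of_key (S := {l : List A // l.length ≤ K + 1} × Set.range (rc L)) L hne
    (fun x => (⟨suf (K + 1) x, suf_length _ _⟩, stt L x))
  · intro x y a h
    simp only [Prod.mk.injEq, Subtype.mk.injEq] at h ⊢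
    exact ⟨suf_suf_snoc _ _ _ _ h.1, stt_append _ _ _ h.2⟩
  · intro x y h
    simp only [Prod.mk.injEq, Subtype.mk.injEq] at h
    exact stt_eq.1 h.2
  · intro x y h
    simp only [Prod.mk.injEq, Subtype.mk.injEq] at h
    exact suf_last _ _ _ h.1
  · intro x y x' y' hx hy hx' hy' ex ey hk hc
    simp only [Prod.mk.injEq, Subtype.mk.injEq, stt_eq, ne_eq] at ex ey hk
    rcases colex_tri x' y' with h | h | h
    · exact h
    · subst h
      exact absurd ⟨ex.1.trans ey.1.symm, ex.2.trans ey.2.symm⟩ hk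
    · exfalso
      have m1 := suf_mono (K + 1) _ _ hc
      have m2 := suf_mono (K + 1) _ _ h
      rw [← ex.1, ← ey.1] at m2
      by_cases hs : suf (K + 1) x = suf (K + 1) y
      · have hd : rc L x ≠ rc L y := fun h => hk ⟨hs, h⟩
        rcases colex_tri y x' with h' | h' | h'
        · exact core x y x' hx hy hx' hs (hs.symm.trans ex.1) hc h' hd (ex.2 ▸ hd.symm)
        · subst h'
          exact hd ex.2
        · refine core y' x' y hy' hx' hy (ey.1.symm.trans (hs.symm.trans ex.1))
            (ex.1.symm.trans hs) h h' ?_ ?_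
          · rw [← ex.2, ← ey.2]; exact hd.symm
          · rw [← ex.2]; exact hd
      · rcases m1 with m1 | m1
        · exact hs m1
        · rcases m2 with m2 | m2
          · exact hs m2.symm
          · exact (m1.tr m2).irr

/-! ### NFA part -/

lemma NFA'.evalFrom_append {A Q : Type} (M : NFA' A Q) (S : Set Q) (x y : List A) :
    M.evalFrom S (x ++ y) = M.evalFrom (M.evalFrom S x) y := by
  induction x generalizing S with
  | nil => rfl
  | cons a x ih => simp only [List.cons_append, NFA'.evalFrom]; exact ih _

lemma NFA'.mem_evalFrom {A Q : Type} (M : NFA' A Q) (S : Set Q) (x : List A) (q : Q) :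
    q ∈ M.evalFrom S x ↔ ∃ p ∈ S, q ∈ M.evalFrom {p} x := by
  induction x generalizing S with
  | nil => simp [NFA'.evalFrom]
  | cons a x ih =>
    simp only [NFA'.evalFrom]
    rw [ih]
    constructor
    · rintro ⟨p, ⟨s, hs, hp⟩, hq⟩
      refine ⟨s, hs, ?_⟩
      rw [ih]
      exact ⟨p, ⟨s, rfl, hp⟩, hq⟩
    · rintro ⟨s, hs, hq⟩
      rw [ih] at hq
      obtain ⟨p, ⟨s', rfl, hp⟩, hq⟩ := hq
      exact ⟨p, ⟨s', hs, hp⟩, hq⟩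

lemma NFA'.mem_append {A Q : Type} (M : NFA' A Q) (S : Set Q) (x y : List A) (q : Q) :
    q ∈ M.evalFrom S (x ++ y) ↔ ∃ p ∈ M.evalFrom S x, q ∈ M.evalFrom {p} y := by
  rw [NFA'.evalFrom_append, NFA'.mem_evalFrom]

lemma NFA'.loop_pow {A Q : Type} (M : NFA' A Q) (p : Q) (γ : List A) (h : p ∈ M.evalFrom {p} γ)
    (k : ℕ) : p ∈ M.evalFrom {p} (wpow γ k) := by
  induction k with
  | zero => simp [wpow, NFA'.evalFrom]
  | succ k ih => rw [wpow, NFA'.mem_append]; exact ⟨p, h, ih⟩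

lemma NFA'.rc_of_eval {A Q : Type} (M : NFA' A Q) (x y : List A)
    (h : M.evalFrom {M.init} x = M.evalFrom {M.init} y) :
    rc M.accepts x = rc M.accepts y := by
  ext w
  simp [rc, NFA'.accepts, NFA'.evalFrom_append, h]

lemma NFA'.pref_of_mem {A Q : Type} (M : NFA' A Q) (ht : M.Trim) (x : List A) (q : Q)
    (h : q ∈ M.evalFrom {M.init} x) : x ∈ Pref M.accepts := by
  obtain ⟨y, q', hq', ha⟩ := ht.2 q
  exact ⟨y, q', (NFA'.mem_append _ _ _ _ _).2 ⟨q, h, hq'⟩, ha⟩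

lemma NFA'.path {A Q : Type} (M : NFA' A Q) (μ γ : List A) (k : ℕ) (q : Q)
    (h : q ∈ M.evalFrom {M.init} (μ ++ wpow γ k)) :
    ∃ s : ℕ → Q, s k = q ∧ ∀ i ≤ k, s i ∈ M.evalFrom {M.init} (μ ++ wpow γ i) ∧
      ∀ j ≤ i, s i ∈ M.evalFrom {s j} (wpow γ (i - j)) := by
  induction k generalizing q with
  | zero =>
    refine ⟨fun _ => q, rfl, ?_⟩
    intro i hi
    obtain rfl : i = 0 := by omega
    exact ⟨h, fun j hj => by simp [wpow, NFA'.evalFrom]⟩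
  | succ k ih =>
    have h0 := h
    rw [wpow_succ', ← List.append_assoc, NFA'.mem_append] at h
    obtain ⟨p, hp, hq⟩ := h
    obtain ⟨s, hs, hs'⟩ := ih p hp
    refine ⟨fun i => if i ≤ k then s i else q, by simp, ?_⟩
    intro i hi
    by_cases hik : i ≤ k
    · refine ⟨by simpa [hik] using (hs' i hik).1, fun j hj => ?_⟩
      have : j ≤ k := by omega
      simpa [hik, this] using (hs' i hik).2 j hj
    · obtain rfl : i = k + 1 := by omega
      refine ⟨by simpa using h0, fun j hj => ?_⟩
      by_cases hjk : j ≤ k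
      · have e : k + 1 - j = (k - j) + 1 := by omega
        simp only [hjk, hik, if_true, if_false]
        rw [e, wpow_succ', NFA'.mem_append]
        exact ⟨s k, (hs' k le_rfl).2 j hjk, by rw [hs]; exact hq⟩
      · obtain rfl : j = k + 1 := by omega
        simp [wpow, NFA'.evalFrom]

lemma NFA'.cycle {A : Type} {n : ℕ} (M : NFA' A (Fin n)) (μ γ : List A)
    (h : μ ++ wpow γ n ∈ Pref M.accepts) :
    ∃ a b p, 0 < b ∧ a + b ≤ n ∧ p ∈ M.evalFrom {M.init} (μ ++ wpow γ a) ∧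
      p ∈ M.evalFrom {p} (wpow γ b) := by
  obtain ⟨w, q', hq', _⟩ := h
  rw [NFA'.mem_append] at hq'
  obtain ⟨q, hq, _⟩ := hq'
  obtain ⟨s, _, hs⟩ := M.path μ γ n q hq
  obtain ⟨i, j, hij, hj, he⟩ := pigeon (fun l : List Unit => s l.length)
    (List.replicate n ()) n (by simp)
  simp at he
  rw [min_eq_left (by omega), min_eq_left (by omega)] at he
  refine ⟨i, j - i, s i, by omega, by omega, (hs i (by omega)).1, ?_⟩
  have := (hs j hj).2 i hij.le
  rwa [← he] at this

lemma NFA'.finite_card {A : Type} {n : ℕ} (M : NFA' A (Fin n)) :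
    Finite (Set.range (rc M.accepts)) ∧ Nat.card (Set.range (rc M.accepts)) ≤ 2 ^ n := by
  have hinj : Function.Injective
      (fun s : Set.range (rc M.accepts) => M.evalFrom {M.init} s.2.choose) := by
    intro s t h
    have := M.rc_of_eval _ _ h
    rw [s.2.choose_spec, t.2.choose_spec] at this
    exact Subtype.ext this
  refine ⟨Finite.of_injective _ hinj, ?_⟩
  have := Nat.card_le_card_of_injective _ hinj
  simpa [Nat.card_eq_fintype_card, Fintype.card_set] using this

/-! ### Wheeler languages have no witnesses -/

lemma wheeler_mono {A Q : Type} [LinearOrder A] (M : PDFA A Q) (r : Q → Q → Prop)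
    (hr : IsWheelerOrder M r) (x y : List A) (u v : Q) (hx : M.evalFrom M.init x = some u)
    (hy : M.evalFrom M.init y = some v) (h : Colex x y) : r u v ∨ u = v := by
  obtain ⟨_, h1, h2, h3⟩ := hr
  induction x using List.reverseRecOn generalizing y u v with
  | nil =>
    simp [PDFA.evalFrom] at hx
    subst hx
    by_cases hv : v = M.init
    · exact Or.inr hv.symm
    · exact Or.inl (h1 v hv)
  | append_singleton x a ih =>
    rcases snoc_cases y with rfl | ⟨y, b, rfl⟩
    · exact (not_colex_nil h).elim
    rw [PDFA.evalFrom_snoc, Option.bind_eq_some_iff] at hx hy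
    obtain ⟨u', hu', hu⟩ := hx
    obtain ⟨v', hv', hv⟩ := hy
    rw [colex_snoc] at h
    have h4 := h3 _ _ _ _ _ _ hu hv
    rcases h with h | ⟨rfl, h⟩
    · exact Or.inl (h4.1 h)
    · rcases ih y u' v' hu' hv' h with h | rfl
      · exact h4.2 rfl h
      · right
        rw [hu] at hv
        simpa using hv

lemma exists_eq_of_mono {Q : Type} [Finite Q] (r : Q → Q → Prop) [Std.Irrefl r] [IsTrans Q r]
    (q : ℕ → Q) (h : ∀ i, r (q i) (q (i + 1)) ∨ q i = q (i + 1)) : ∃ i, q i = q (i + 1) := by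
  by_contra hcon
  push Not at hcon
  have h' : ∀ i, r (q i) (q (i + 1)) := fun i => (h i).resolve_right (hcon i)
  apply not_injective_infinite_finite q
  intro i j hij
  have key : ∀ i j, i < j → r (q i) (q j) := fun i j hij =>
    Nat.rel_of_forall_rel_succ_of_lt r h' hij
  rcases lt_trichotomy i j with h1 | h1 | h1
  · have := key _ _ h1; rw [hij] at this; exact absurd this (Std.Irrefl.irrefl _)
  · exact h1
  · have := key _ _ h1; rw [hij] at this; exact absurd this (Std.Irrefl.irrefl _)

lemma not_wheeler {A : Type} [LinearOrder A] {L : Set (List A)} (hW : IsWheelerLang L)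
    (μ ν γ : List A) (hsμ : ¬ γ <:+ μ) (hsν : ¬ γ <:+ ν)
    (hμ : ∀ i, μ ++ wpow γ i ∈ Pref L) (hν : ∀ i, ν ++ wpow γ i ∈ Pref L)
    (hc : (Colex μ γ ∧ Colex ν γ) ∨ (Colex γ μ ∧ Colex γ ν)) :
    ∃ i j, rc L (μ ++ wpow γ i) = rc L (ν ++ wpow γ j) := by
  obtain ⟨n, M, r, hr, rfl⟩ := hW
  let w : ℕ → List A := fun i => (if Even i then μ else ν) ++ wpow γ i
  have hw : ∀ i, ∃ q, M.evalFrom M.init (w i) = some q := by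
    intro i
    have : w i ∈ Pref M.accepts := by
      simp only [w]
      split_ifs
      · exact hμ i
      · exact hν i
    obtain ⟨y, q, hq, _⟩ := this
    rw [PDFA.evalFrom_append, Option.bind_eq_some_iff] at hq
    obtain ⟨q', h, _⟩ := hq
    exact ⟨q', h⟩
  choose q hq using hw
  have hex : ∃ i, q i = q (i + 1) := by
    have := hr.1
    rcases hc with ⟨h1, h2⟩ | ⟨h1, h2⟩
    · apply exists_eq_of_mono r
      intro i
      apply wheeler_mono M r hr _ _ _ _ (hq i) (hq (i + 1))
      simp only [w, wpow]
      rw [← List.append_assoc, colex_append]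
      by_cases hi : Even i
      · simp only [hi, if_true]; exact colex_prepend h1 _
      · simp only [hi, if_false]; exact colex_prepend h2 _
    · apply exists_eq_of_mono (Function.swap r)
      intro i
      have := wheeler_mono M r hr _ _ _ _ (hq (i + 1)) (hq i) (by
        simp only [w, wpow]
        rw [← List.append_assoc, colex_append]
        by_cases hi : Even i
        · simp only [hi, if_true]; exact colex_prepend' h1 hsμ _
        · simp only [hi, if_false]; exact colex_prepend' h2 hsν _)
      rcases this with h | h
      · exact Or.inl h
      · exact Or.inr h.symm
  obtain ⟨i, hi⟩ := hex
  have hrc : rc M.accepts (w i) = rc M.accepts (w (i + 1)) := by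
    ext y
    simp only [rc, PDFA.accepts, Set.mem_ofPred_eq, PDFA.evalFrom_append, hq, hi]
  by_cases he : Even i
  · have : ¬ Even (i + 1) := by simpa [Nat.even_add_one] using he
    simp only [w, he, this, if_true, if_false] at hrc
    exact ⟨_, _, hrc⟩
  · have h' : Even (i + 1) := by simpa [Nat.even_add_one] using he
    simp only [w, he, h', if_true, if_false] at hrc
    exact ⟨_, _, hrc.symm⟩

lemma small_exp {A : Type} {L : Set (List A)} [Finite (Set.range (rc L))]
    (N : ℕ) (hN : Nat.card (Set.range (rc L)) ≤ N) (μ γ : List A) (i : ℕ) :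
    ∃ i' ≤ N, rc L (μ ++ wpow γ i') = rc L (μ ++ wpow γ i) := by
  obtain ⟨l, h1, h2⟩ := shrink (fun l : List Unit => stt L (μ ++ wpow γ l.length)) (by
    intro x y z h
    simp only [List.length_append, wpow_add]
    rw [← List.append_assoc, ← List.append_assoc]
    exact stt_append _ _ _ h) (List.replicate i ())
  simp only [List.length_replicate, stt_eq] at h1
  exact ⟨l.length, by omega, h1⟩

end Helpers

section Statement1

/-- Corollary 1 of the paper: characterization of
non-Wheelerness of the language of a trim NFA, with bounds on the witnesses. -/
theorem statement1 {A : Type} [Fintype A] [LinearOrder A] {n : ℕ}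
    (M : NFA' A (Fin n)) (htrim : M.Trim)
    (L : Set (List A)) (hL : L = M.accepts) :
    (¬ IsWheelerLang L ↔
      ∃ (μ ν γ : List A),
        ¬ γ <:+ μ ∧ ¬ γ <:+ ν ∧
        (∀ i j : ℕ, i ≤ 2 ^ n → j ≤ 2 ^ n →
          rc L (μ ++ wpow γ i) ≠ rc L (ν ++ wpow γ j)) ∧
        (∃ p ∈ M.evalFrom {M.init} μ, p ∈ M.evalFrom {p} γ) ∧
        (∃ r ∈ M.evalFrom {M.init} ν, r ∈ M.evalFrom {r} γ) ∧
        ((Colex μ γ ∧ Colex ν γ) ∨ (Colex γ μ ∧ Colex γ ν))) ∧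
    (¬ IsWheelerLang L →
      ∃ (μ ν γ : List A),
        ¬ γ <:+ μ ∧ ¬ γ <:+ ν ∧
        (∀ i j : ℕ, i ≤ 2 ^ n → j ≤ 2 ^ n →
          rc L (μ ++ wpow γ i) ≠ rc L (ν ++ wpow γ j)) ∧
        (∃ p ∈ M.evalFrom {M.init} μ, p ∈ M.evalFrom {p} γ) ∧
        (∃ r ∈ M.evalFrom {M.init} ν, r ∈ M.evalFrom {r} γ) ∧
        ((Colex μ γ ∧ Colex ν γ) ∨ (Colex γ μ ∧ Colex γ ν)) ∧
        μ.length < γ.length ∧ ν.length < γ.length ∧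
        γ.length ≤ n ^ 3 * (2 ^ (3 * n) + 2 * 2 ^ (2 * n) + 2 ^ n + 2)) := by
  subst hL
  obtain ⟨hfin, hcard⟩ := M.finite_card
  have hnil : [] ∈ Pref M.accepts :=
    M.pref_of_mem htrim [] M.init (by simp [NFA'.evalFrom])
  have hn : 0 < n := Fin.pos M.init
  have forward : ¬ IsWheelerLang M.accepts →
      ∃ (μ ν γ : List A),
        ¬ γ <:+ μ ∧ ¬ γ <:+ ν ∧
        (∀ i j : ℕ, i ≤ 2 ^ n → j ≤ 2 ^ n →
          rc M.accepts (μ ++ wpow γ i) ≠ rc M.accepts (ν ++ wpow γ j)) ∧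
        (∃ p ∈ M.evalFrom {M.init} μ, p ∈ M.evalFrom {p} γ) ∧
        (∃ r ∈ M.evalFrom {M.init} ν, r ∈ M.evalFrom {r} γ) ∧
        ((Colex μ γ ∧ Colex ν γ) ∨ (Colex γ μ ∧ Colex γ ν)) ∧
        μ.length < γ.length ∧ ν.length < γ.length ∧
        γ.length ≤ n ^ 3 * (2 ^ (3 * n) + 2 * 2 ^ (2 * n) + 2 ^ n + 2) := by
    intro hW
    have hT : Triple M.accepts ((2 ^ n) ^ 3) := by
      by_contra hT
      apply hW
      have e : (2 ^ n) ^ 3 = ((2 ^ n) ^ 3 - 1) + 1 := by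
        have : 0 < (2 ^ n) ^ 3 := by positivity
        omega
      rw [e] at hT
      exact wheeler_of_not_triple hnil _ hT
    obtain ⟨μ, ν, γ, hμ, hν, hd, lμ, lν, hc, hlμ, hlν, hlγ⟩ := det_witness (2 ^ n) hcard hT
    obtain ⟨a1, b1, p, hb1, hab1, hp, hpl⟩ := M.cycle μ γ ((pref_congr (rc_loop lμ n)).2 hμ)
    obtain ⟨a2, b2, r, hb2, hab2, hr, hrl⟩ := M.cycle ν γ ((pref_congr (rc_loop lν n)).2 hν)
    obtain ⟨c, hc0⟩ : ∃ c, c = b1 * b2 * n := ⟨_, rfl⟩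
    have hcn : n ≤ c := by
      rw [hc0]; exact Nat.le_mul_of_pos_left _ (Nat.mul_pos hb1 hb2)
    have hcn3 : c ≤ n ^ 3 := by
      rw [hc0]
      calc b1 * b2 * n ≤ n * n * n :=
            Nat.mul_le_mul_right _ (Nat.mul_le_mul (by omega) (by omega))
        _ = n ^ 3 := by ring
    have len : ∀ (x : List A) (a : ℕ), a < n → x.length < γ.length →
        (x ++ wpow γ a).length < (wpow γ c).length := by
      intro x a ha hx
      rw [List.length_append, wpow_length, wpow_length]
      have : (a + 1) * γ.length ≤ c * γ.length := Nat.mul_le_mul_right _ (by omega)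
      nlinarith
    have split : ∀ a, a < n → wpow γ c = (wpow γ (c - a - 1) ++ γ) ++ wpow γ a := by
      intro a ha
      rw [← wpow_succ', ← wpow_add]
      congr 1
      omega
    have up : ∀ (x : List A) (a : ℕ), a < n → Colex x γ → Colex (x ++ wpow γ a) (wpow γ c) := by
      intro x a ha hx
      rw [split a ha, colex_append]
      exact colex_prepend hx _
    have down : ∀ (x : List A) (a : ℕ), a < n → x.length < γ.length → Colex γ x →
        Colex (wpow γ c) (x ++ wpow γ a) := by
      intro x a ha hl hx
      rw [split a ha, colex_append]
      exact colex_prepend' hx (fun h => by have := h.length_le; omega) _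
    have loop : ∀ (x : List A) (a i : ℕ), rc M.accepts (x ++ γ) = rc M.accepts x →
        rc M.accepts (x ++ wpow γ a ++ wpow (wpow γ c) i) = rc M.accepts x := by
      intro x a i hx
      rw [List.append_assoc, ← wpow_mul, ← wpow_add]
      exact rc_loop hx _
    have h1 := len μ a1 (by omega) hlμ
    have h2 := len ν a2 (by omega) hlν
    refine ⟨μ ++ wpow γ a1, ν ++ wpow γ a2, wpow γ c, ?_, ?_, ?_, ⟨p, hp, ?_⟩, ⟨r, hr, ?_⟩,
      ?_, h1, h2, ?_⟩
    · intro h; have := h.length_le; omega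
    · intro h; have := h.length_le; omega
    · intro i j _ _
      rw [loop _ _ _ lμ, loop _ _ _ lν]
      exact hd
    · rw [hc0, mul_assoc, wpow_mul]
      exact M.loop_pow _ _ hpl _
    · rw [hc0, mul_comm b1 b2, mul_assoc, wpow_mul]
      exact M.loop_pow _ _ hrl _
    · rcases hc with ⟨h, h'⟩ | ⟨h, h'⟩
      · exact Or.inl ⟨up _ _ (by omega) h, up _ _ (by omega) h'⟩
      · exact Or.inr ⟨down _ _ (by omega) hlμ h, down _ _ (by omega) hlν h'⟩
    · rw [wpow_length]
      refine Nat.mul_le_mul hcn3 (hlγ.trans ?_)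
      rw [pow_mul', pow_mul']
      omega
  refine ⟨⟨fun hW => ?_, ?_⟩, forward⟩
  · obtain ⟨μ, ν, γ, h1, h2, h3, h4, h5, h6, _⟩ := forward hW
    exact ⟨μ, ν, γ, h1, h2, h3, h4, h5, h6⟩
  · rintro ⟨μ, ν, γ, h1, h2, h3, ⟨p, hp, hp'⟩, ⟨r, hr, hr'⟩, h6⟩ hW
    obtain ⟨i, j, hij⟩ := not_wheeler hW μ ν γ h1 h2
      (fun i => M.pref_of_mem htrim _ p ((M.mem_append _ _ _ _).2 ⟨p, hp, M.loop_pow _ _ hp' i⟩))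
      (fun i => M.pref_of_mem htrim _ r ((M.mem_append _ _ _ _).2 ⟨r, hr, M.loop_pow _ _ hr' i⟩))
      h6
    obtain ⟨i', hi', ei⟩ := small_exp (2 ^ n) hcard μ γ i
    obtain ⟨j', hj', ej⟩ := small_exp (2 ^ n) hcard ν γ j
    exact h3 i' j' hi' hj' (by rw [ei, ej, hij])

end Statement1

end WheelerPaper
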